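/- arXiv:math/0611057 — 3 statements merged into one kernel-verified Lean document; each statement's English description precedes it below -/
import Mathlib

section
/- The polynomials s_n(z) = z^n S_{2n−1}(π/√z) are orthogonal with respect to the linear functional L[f] = ∑_{ν∈ℤ\{0}} (1/ν²) f(1/ν²); that is, L[s_m · s_n] = 0 for all m ≠ n. -/
open Real

/-!
On `[0, 1]` the `k`-th Fourier coefficient of the shifted Legendre polynomial `P_{n+1}` is, up to a
nonzero factor depending only on `n`, equal to `S_{n-1}(πk) / k ^ (n + 1)`: integrating
`(P_{n+2} - P_n)' = -(4n + 6) P_{n+1}` by parts gives a three-term recurrence for the coefficients,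
and this is the recurrence defining `S`. The orthogonality of the `P_n` in `L²(0, 1)` therefore
becomes, by Parseval's identity, the orthogonality of the sequences `S_{n-1}(πk) / k ^ (n + 1)`,
`k ≠ 0`. Since `S_{n-1}` is even, `s_n(1 / k²) / k` is the member of index `2n` of this family.
-/

open Polynomial MeasureTheory Set
open scoped ComplexConjugate Nat

theorem iterate_derivative_two_X_mul_one_sub_X_pow {R : Type*} [CommRing R] (n : ℕ) :
    derivative^[2] ((X * (1 - X) : R[X]) ^ (n + 2)) =
      ((n + 2) * (n + 1)) • (X * (1 - X)) ^ n -
        ((n + 2) * (4 * n + 6)) • (X * (1 - X)) ^ (n + 1) := by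
  simp only [Function.iterate_succ_apply, Function.iterate_zero_apply, derivative_pow_succ,
    derivative_mul, derivative_sub, derivative_X, derivative_one, derivative_zero,
    derivative_natCast, map_add, map_natCast, map_one, nsmul_eq_mul]
  push_cast
  ring

theorem factorial_mul_derivative_shiftedLegendre (n : ℕ) :
    (n ! : ℤ[X]) * derivative (shiftedLegendre n) = derivative^[n + 1] ((X * (1 - X)) ^ n) := by
  rw [Function.iterate_succ_apply', mul_pow, ← factorial_mul_shiftedLegendre_eq,
    derivative_natCast_mul]

theorem derivative_shiftedLegendre_add_two (n : ℕ) :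
    derivative (shiftedLegendre (n + 2)) =
      derivative (shiftedLegendre n) - (4 * n + 6) * shiftedLegendre (n + 1) := by
  refine mul_left_cancel₀ (Nat.cast_ne_zero.mpr (n + 2).factorial_ne_zero) ?_
  calc ((n + 2)! : ℤ[X]) * derivative (shiftedLegendre (n + 2))
    _ = derivative^[n + 1] (derivative^[2] ((X * (1 - X)) ^ (n + 2))) := by
        rw [factorial_mul_derivative_shiftedLegendre, ← Function.iterate_add_apply]
    _ = ((n + 2) * (n + 1)) • derivative^[n + 1] ((X * (1 - X)) ^ n) -
          ((n + 2) * (4 * n + 6)) • derivative^[n + 1] ((X * (1 - X)) ^ (n + 1)) := by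
        rw [iterate_derivative_two_X_mul_one_sub_X_pow, iterate_derivative_sub,
          iterate_derivative_smul, iterate_derivative_smul]
    _ = ((n + 2)! : ℤ[X]) *
          (derivative (shiftedLegendre n) - (4 * n + 6) * shiftedLegendre (n + 1)) := by
        rw [← factorial_mul_derivative_shiftedLegendre, mul_pow,
          ← factorial_mul_shiftedLegendre_eq]
        simp only [Nat.factorial_succ, nsmul_eq_mul]
        push_cast
        ring

/-- The shifted Legendre polynomial `P_n` with real coefficients, for integration over `[0, 1]`.
Mathlib's normalization is `P_n(0) = 1`. -/
noncomputable def realShiftedLegendre (n : ℕ) : ℝ[X] :=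
  (shiftedLegendre n).map (Int.castRingHom ℝ)

theorem realShiftedLegendre_zero : realShiftedLegendre 0 = 1 := by
  simp [realShiftedLegendre, shiftedLegendre]

theorem realShiftedLegendre_one : realShiftedLegendre 1 = 1 - (2 : ℝ) • X := by
  ext j
  rcases j with _ | _ | j <;>
    simp [realShiftedLegendre, coeff_shiftedLegendre, Nat.choose_eq_zero_iff, coeff_one, coeff_X]

theorem degree_realShiftedLegendre (n : ℕ) : (realShiftedLegendre n).degree = n := by
  rw [realShiftedLegendre, degree_map_eq_of_injective Int.cast_injective, degree_shiftedLegendre]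

theorem eval_zero_realShiftedLegendre (n : ℕ) : (realShiftedLegendre n).eval 0 = 1 := by
  simp [realShiftedLegendre, ← coeff_zero_eq_eval_zero, coeff_shiftedLegendre]

theorem eval_one_realShiftedLegendre (n : ℕ) : (realShiftedLegendre n).eval 1 = (-1) ^ n := by
  have h := shiftedLegendre_eval_symm n (1 : ℝ)
  rwa [sub_self, aeval_def, aeval_def, algebraMap_int_eq, ← eval_map, ← eval_map,
    ← realShiftedLegendre, eval_zero_realShiftedLegendre, mul_one] at h

theorem derivative_realShiftedLegendre_add_two_sub (n : ℕ) :
    derivative (realShiftedLegendre (n + 2) - realShiftedLegendre n) =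
      -(4 * n + 6 : ℝ) • realShiftedLegendre (n + 1) := by
  simp only [realShiftedLegendre, derivative_sub, derivative_map,
    derivative_shiftedLegendre_add_two, smul_eq_C_mul, Polynomial.map_sub, Polynomial.map_mul,
    Polynomial.map_add, Polynomial.map_natCast, Polynomial.map_ofNat, C_neg, C_add, C_mul,
    map_natCast, map_ofNat]
  ring

theorem degree_derivative_lt_of_degree_lt_succ {R : Type*} [Semiring R] {p : R[X]} {d : ℕ}
    (hp : p.degree < (d + 1 : ℕ)) : (derivative p).degree < d := by
  rw [degree_lt_iff_coeff_zero] at hp ⊢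
  intro k hk
  rw [coeff_derivative, hp (k + 1) (Nat.succ_le_succ hk), zero_mul]

theorem integral_eval_mul_derivative (p q : ℝ[X]) (a b : ℝ) :
    ∫ x in a..b, (p * derivative q).eval x =
      (p * q).eval b - (p * q).eval a - ∫ x in a..b, (derivative p * q).eval x := by
  simp only [eval_mul]
  exact intervalIntegral.integral_mul_deriv_eq_deriv_mul (fun x _ => p.hasDerivAt x)
    (fun x _ => q.hasDerivAt x) ((derivative p).continuous.intervalIntegrable a b)
    ((derivative q).continuous.intervalIntegrable a b)

theorem integral_realShiftedLegendre_succ_mul (n : ℕ) (q : ℝ[X]) :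
    (4 * n + 6) * ∫ x in (0 : ℝ)..1, (realShiftedLegendre (n + 1) * q).eval x =
      (∫ x in (0 : ℝ)..1, (realShiftedLegendre (n + 2) * derivative q).eval x) -
        ∫ x in (0 : ℝ)..1, (realShiftedLegendre n * derivative q).eval x := by
  have by_parts :=
    integral_eval_mul_derivative (realShiftedLegendre (n + 2) - realShiftedLegendre n) q 0 1
  rw [derivative_realShiftedLegendre_add_two_sub] at by_parts
  simp only [eval_mul, eval_sub, eval_smul, smul_eq_mul, eval_zero_realShiftedLegendre,
    eval_one_realShiftedLegendre, pow_add, even_two.neg_one_pow, mul_one, sub_self, zero_sub,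
    sub_mul, neg_mul, mul_assoc, intervalIntegral.integral_neg,
    intervalIntegral.integral_const_mul, neg_neg] at by_parts ⊢
  rw [← by_parts, intervalIntegral.integral_sub] <;>
    exact Continuous.intervalIntegrable (by fun_prop) 0 1

theorem integral_realShiftedLegendre_mul_eq_zero {n d : ℕ} (hdn : d ≤ n) {q : ℝ[X]}
    (hq : q.degree < d) : ∫ x in (0 : ℝ)..1, (realShiftedLegendre n * q).eval x = 0 := by
  induction d generalizing n q with
  | zero => simp [show q = 0 by simpa using hq]
  | succ d ih =>
    obtain ⟨n, rfl⟩ := Nat.exists_eq_add_one_of_ne_zero (Nat.ne_zero_of_lt hdn)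
    have hq' := degree_derivative_lt_of_degree_lt_succ hq
    have h := integral_realShiftedLegendre_succ_mul n q
    rw [ih (by omega) hq', ih (by omega) hq', sub_zero] at h
    exact (mul_eq_zero.mp h).resolve_left (by positivity)

theorem integral_realShiftedLegendre_mul_realShiftedLegendre {m n : ℕ} (hmn : m ≠ n) :
    ∫ x in (0 : ℝ)..1, (realShiftedLegendre m * realShiftedLegendre n).eval x = 0 := by
  wlog h : n < m generalizing m n
  · rw [mul_comm]
    exact this hmn.symm (by omega)
  · exact integral_realShiftedLegendre_mul_eq_zero le_rfl
      (by simpa only [degree_realShiftedLegendre, Nat.cast_lt] using h)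

theorem hasSum_conj_fourierCoeffOn_mul {a b : ℝ} {f g : ℝ → ℂ} (hab : a < b)
    (hf : MemLp f 2 (volume.restrict (Ioc a b))) (hg : MemLp g 2 (volume.restrict (Ioc a b))) :
    HasSum (fun k => conj (fourierCoeffOn hab f k) * fourierCoeffOn hab g k)
      ((b - a)⁻¹ • ∫ x in a..b, conj (f x) * g x) := by
  have := Fact.mk (sub_pos.mpr hab)
  rw [← add_sub_cancel a b] at hf hg
  have hF := hf.memLp_liftIoc.haarAddCircle
  have hG := hg.memLp_liftIoc.haarAddCircle
  have inner_fourierBasis {h : ℝ → ℂ} (k : ℤ)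
      (hH : MemLp (AddCircle.liftIoc (b - a) a h) 2 AddCircle.haarAddCircle) :
      inner ℂ (fourierBasis k) hH.toLp = fourierCoeffOn hab h k := by
    rw [← fourierBasis.repr_apply_apply, fourierBasis_repr, fourierCoeff_congr_ae hH.coeFn_toLp]
    rfl
  have inner_toLp : inner ℂ hF.toLp hG.toLp = (b - a)⁻¹ • ∫ x in a..b, conj (f x) * g x := by
    have integral_lift := AddCircle.integral_liftIoc_eq_intervalIntegral (T := b - a) (t := a)
      (f := fun x => conj (f x) * g x)
    rw [add_sub_cancel] at integral_lift
    rw [← integral_lift, ← AddCircle.integral_haarAddCircle, L2.inner_def]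
    refine integral_congr_ae ?_
    filter_upwards [hF.coeFn_toLp, hG.coeFn_toLp] with x hfx hgx
    rw [hfx, hgx, RCLike.inner_apply']
    rfl
  rw [← inner_toLp]
  refine (fourierBasis.hasSum_inner_mul_inner hF.toLp hG.toLp).congr_fun fun k => ?_
  rw [← inner_conj_symm, inner_fourierBasis, inner_fourierBasis]

/-- The `k`-th Fourier coefficient on `[0, 1]` of a real polynomial, bundled as a linear map so
that linear relations between polynomials transfer to their coefficients. -/
noncomputable def polyFourierCoeff (k : ℤ) : ℝ[X] →ₗ[ℝ] ℂ where
  toFun p := fourierCoeffOn zero_lt_one (fun x => ((p.eval x : ℝ) : ℂ)) k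
  map_add' p q := by
    have intervalIntegrable (r : ℝ[X]) : IntervalIntegrable
        (fun x : ℝ => fourier (-k) (x : AddCircle ((1 : ℝ) - 0)) • ((r.eval x : ℝ) : ℂ))
        volume 0 1 :=
      (((map_continuous (fourier (-k))).comp (AddCircle.continuous_mk' _)).smul
        (by fun_prop)).intervalIntegrable 0 1
    simp only [fourierCoeffOn_eq_integral, eval_add, Complex.ofReal_add, smul_add]
    rw [intervalIntegral.integral_add (intervalIntegrable p) (intervalIntegrable q), smul_add]
  map_smul' c p := by
    simpa using fourierCoeffOn.const_mul (fun x => ((p.eval x : ℝ) : ℂ)) c k zero_lt_one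

theorem polyFourierCoeff_apply (k : ℤ) (p : ℝ[X]) :
    polyFourierCoeff k p = fourierCoeffOn zero_lt_one (fun x => ((p.eval x : ℝ) : ℂ)) k :=
  rfl

theorem polyFourierCoeff_zero (p : ℝ[X]) :
    polyFourierCoeff 0 p = (∫ x in (0 : ℝ)..1, p.eval x : ℝ) := by
  simp [polyFourierCoeff_apply, fourierCoeffOn_eq_integral, intervalIntegral.integral_ofReal]

theorem polyFourierCoeff_eq_derivative {k : ℤ} (hk : k ≠ 0) (p : ℝ[X]) :
    polyFourierCoeff k p =
      (polyFourierCoeff k (derivative p) - (p.eval 1 - p.eval 0 : ℝ)) /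
        (2 * π * k * Complex.I) := by
  have by_parts := fourierCoeffOn_of_hasDerivAt zero_lt_one hk
    (fun x _ => (p.hasDerivAt x).ofReal_comp) (Continuous.intervalIntegrable (by fun_prop) _ _)
  rw [polyFourierCoeff_apply, by_parts, QuotientAddGroup.mk_zero, fourier_eval_zero,
    ← polyFourierCoeff_apply]
  push_cast
  field_simp
  ring

theorem hasSum_conj_polyFourierCoeff_mul (p q : ℝ[X]) :
    HasSum (fun k => conj (polyFourierCoeff k p) * polyFourierCoeff k q)
      (∫ x in (0 : ℝ)..1, (p * q).eval x : ℝ) := by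
  have memLp (r : ℝ[X]) :
      MemLp (fun x : ℝ => ((r.eval x : ℝ) : ℂ)) 2 (volume.restrict (Ioc 0 1)) :=
    (memLp_two_iff_integrable_sq_norm (by fun_prop)).mpr
      (Continuous.integrableOn_Ioc (by fun_prop))
  simpa [polyFourierCoeff_apply, ← intervalIntegral.integral_ofReal] using
    hasSum_conj_fourierCoeffOn_mul zero_lt_one (memLp p) (memLp q)

theorem polyFourierCoeff_one {k : ℤ} (hk : k ≠ 0) : polyFourierCoeff k 1 = 0 := by
  rw [polyFourierCoeff_eq_derivative hk, derivative_one, map_zero, eval_one, eval_one, sub_self,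
    Complex.ofReal_zero, sub_zero, zero_div]

theorem polyFourierCoeff_X {k : ℤ} (hk : k ≠ 0) :
    polyFourierCoeff k X = -1 / (2 * π * k * Complex.I) := by
  rw [polyFourierCoeff_eq_derivative hk, derivative_X, polyFourierCoeff_one hk, eval_X, eval_X,
    sub_zero, Complex.ofReal_one, zero_sub]

theorem polyFourierCoeff_zero_realShiftedLegendre_succ (n : ℕ) :
    polyFourierCoeff 0 (realShiftedLegendre (n + 1)) = 0 := by
  have h := integral_realShiftedLegendre_mul_realShiftedLegendre n.succ_ne_zero
  rw [realShiftedLegendre_zero, mul_one] at h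
  rw [polyFourierCoeff_zero, h, Complex.ofReal_zero]

theorem polyFourierCoeff_realShiftedLegendre_one {k : ℤ} (hk : k ≠ 0) :
    polyFourierCoeff k (realShiftedLegendre 1) = 1 / (π * k * Complex.I) := by
  rw [realShiftedLegendre_one, map_sub, map_smul, polyFourierCoeff_one hk, polyFourierCoeff_X hk,
    Complex.real_smul]
  push_cast
  field_simp
  ring

theorem polyFourierCoeff_realShiftedLegendre_add_two {k : ℤ} (hk : k ≠ 0) (n : ℕ) :
    polyFourierCoeff k (realShiftedLegendre (n + 2)) =
      polyFourierCoeff k (realShiftedLegendre n) -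
        (2 * n + 3) / (π * k * Complex.I) * polyFourierCoeff k (realShiftedLegendre (n + 1)) := by
  have h := polyFourierCoeff_eq_derivative hk (realShiftedLegendre (n + 2) - realShiftedLegendre n)
  rw [derivative_realShiftedLegendre_add_two_sub, map_sub, map_smul, sub_eq_iff_eq_add] at h
  rw [h]
  simp only [eval_sub, eval_zero_realShiftedLegendre, eval_one_realShiftedLegendre, pow_add,
    Complex.real_smul]
  push_cast
  field_simp
  ring

/-- The functions `S_n`, with the index shifted to start at `0`: `lommelS n = S_{n-1}`. Then
`x ↦ lommelS n x / x ^ n` is, up to a constant factor, the Lommel polynomial `R_{n, 3/2}`. -/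
noncomputable def lommelS : ℕ → ℝ → ℝ
  | 0, _ => 1
  | 1, _ => 1
  | n + 2, x => lommelS (n + 1) x - x ^ 2 / ((2 * n + 3) * (2 * n + 5)) * lommelS n x

theorem lommelS_neg (n : ℕ) (x : ℝ) : lommelS n (-x) = lommelS n x := by
  induction n using Nat.twoStepInduction with
  | zero | one => rfl
  | more n ih₀ ih₁ => simp only [lommelS, ih₀, ih₁, neg_sq]

theorem lommelS_abs (n : ℕ) (x : ℝ) : lommelS n |x| = lommelS n x := by
  rcases abs_choice x with h | h <;> simp only [h, lommelS_neg]

/-- The factor between `lommelS n (π * k) / k ^ (n + 1)` and the `k`-th Fourier coefficient of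
`realShiftedLegendre (n + 1)`; it does not depend on `k`. -/
noncomputable def legendreFourierFactor (n : ℕ) : ℂ :=
  (-1) ^ n * (2 * n + 1)‼ / (π * Complex.I) ^ (n + 1)

theorem legendreFourierFactor_ne_zero (n : ℕ) : legendreFourierFactor n ≠ 0 := by
  have h : ((2 * n + 1)‼ : ℂ) ≠ 0 := mod_cast (Nat.doubleFactorial_pos (2 * n + 1)).ne'
  simp [legendreFourierFactor, pi_ne_zero, h]

theorem polyFourierCoeff_realShiftedLegendre_succ {k : ℤ} (hk : k ≠ 0) (n : ℕ) :
    polyFourierCoeff k (realShiftedLegendre (n + 1)) =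
      legendreFourierFactor n * (lommelS n (π * k) / k ^ (n + 1) : ℝ) := by
  have doubleFactorial_step (j : ℕ) : (2 * (j + 1) + 1)‼ = (2 * j + 3) * (2 * j + 1)‼ :=
    Nat.doubleFactorial_add_two (2 * j + 1)
  induction n using Nat.twoStepInduction with
  | zero =>
    rw [polyFourierCoeff_realShiftedLegendre_one hk]
    simp only [legendreFourierFactor, lommelS, zero_add, pow_zero, pow_one, Nat.doubleFactorial]
    push_cast
    field_simp
  | one =>
    rw [polyFourierCoeff_realShiftedLegendre_add_two hk, realShiftedLegendre_zero,
      polyFourierCoeff_one hk, polyFourierCoeff_realShiftedLegendre_one hk]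
    simp only [legendreFourierFactor, lommelS, Nat.doubleFactorial, mul_one, pow_one]
    push_cast
    field_simp
    ring
  | more n ih₀ ih₁ =>
    have h₃ : (2 * n + 3 : ℂ) ≠ 0 := mod_cast (2 * n + 2).succ_ne_zero
    have h₅ : (2 * n + 5 : ℂ) ≠ 0 := mod_cast (2 * n + 4).succ_ne_zero
    rw [polyFourierCoeff_realShiftedLegendre_add_two hk, ih₀, ih₁]
    simp only [legendreFourierFactor, lommelS, doubleFactorial_step, pow_succ]
    push_cast
    field_simp
    ring_nf
    simp only [Complex.I_sq]
    ring

theorem hasSum_lommelS_mul_lommelS {m n : ℕ} (hmn : m ≠ n) :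
    HasSum (fun k : {k : ℤ // k ≠ 0} =>
      lommelS m (π * (k : ℤ)) * lommelS n (π * (k : ℤ)) / ((k : ℤ) : ℝ) ^ (m + n + 2)) 0 := by
  have parseval :=
    hasSum_conj_polyFourierCoeff_mul (realShiftedLegendre (m + 1)) (realShiftedLegendre (n + 1))
  rw [integral_realShiftedLegendre_mul_realShiftedLegendre (by omega)] at parseval
  have support_subset :
      (fun k => conj (polyFourierCoeff k (realShiftedLegendre (m + 1))) *
        polyFourierCoeff k (realShiftedLegendre (n + 1))).support ⊆ {k | k ≠ 0} := by
    rintro k hk rfl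
    exact hk (mul_eq_zero_of_right _ (polyFourierCoeff_zero_realShiftedLegendre_succ n))
  have factor_ne_zero : conj (legendreFourierFactor m) * legendreFourierFactor n ≠ 0 :=
    mul_ne_zero ((_root_.map_ne_zero _).mpr (legendreFourierFactor_ne_zero m))
      (legendreFourierFactor_ne_zero n)
  rw [← Complex.hasSum_ofReal, ← hasSum_mul_left_iff factor_ne_zero, Complex.ofReal_zero, mul_zero]
  refine ((hasSum_subtype_iff_of_support_subset support_subset).mpr parseval).congr_fun fun k => ?_
  simp only [Function.comp_apply, polyFourierCoeff_realShiftedLegendre_succ k.2, map_mul,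
    Complex.conj_ofReal]
  push_cast
  ring

theorem one_div_sq_pow_mul_lommelS (n m : ℕ) (k : ℤ) :
    (1 / (k : ℝ) ^ 2) ^ n * lommelS m (π / √(1 / (k : ℝ) ^ 2)) =
      lommelS m (π * k) / (k : ℝ) ^ (2 * n) := by
  have h : π / √(1 / (k : ℝ) ^ 2) = |π * k| := by
    rw [sqrt_div zero_le_one, sqrt_one, sqrt_sq_eq_abs, div_div_eq_mul_div, div_one, abs_mul,
      abs_of_pos pi_pos]
  rw [h, lommelS_abs, div_pow, one_pow, ← pow_mul, one_div_mul_eq_div]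

/-- The polynomials `s_n(z) = z^n S_{2n−1}(π/√z)` are orthogonal with respect to the
linear functional `L[f] = ∑_{ν∈ℤ\{0}} (1/ν²) f(1/ν²)`: `L[s_m · s_n] = 0` for `m ≠ n`.
Here `T (n+1) x = S_n(x)` encodes `S_{−1} = S_0 = 1`,
`S_{n+1}(x) = S_n(x) − (x²/((2n+3)(2n+5))) S_{n−1}(x)`. -/
theorem s_orthogonal (T : ℕ → ℝ → ℝ)
    (hT0 : ∀ x, T 0 x = 1) (hT1 : ∀ x, T 1 x = 1)
    (hTrec : ∀ (n : ℕ) (x : ℝ),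
      T (n + 2) x = T (n + 1) x - x ^ 2 / ((2 * (n : ℝ) + 3) * (2 * (n : ℝ) + 5)) * T n x)
    (s : ℕ → ℝ → ℝ)
    (hs : ∀ (n : ℕ) (z : ℝ), s n z = z ^ n * T (2 * n) (π / Real.sqrt z)) :
    ∀ m n : ℕ, m ≠ n →
      ∑' ν : {ν : ℤ // ν ≠ 0},
        (1 / ((ν : ℤ) : ℝ) ^ 2) * s m (1 / ((ν : ℤ) : ℝ) ^ 2) * s n (1 / ((ν : ℤ) : ℝ) ^ 2)
        = 0 := by
  intro m n hmn
  have T_eq_lommelS (j : ℕ) (x : ℝ) : T j x = lommelS j x := by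
    induction j using Nat.twoStepInduction with
    | zero => exact hT0 x
    | one => exact hT1 x
    | more j ih₀ ih₁ => rw [hTrec, ih₀, ih₁, lommelS]
  have s_one_div_sq (j : ℕ) (k : ℤ) :
      s j (1 / (k : ℝ) ^ 2) = lommelS (2 * j) (π * k) / (k : ℝ) ^ (2 * j) := by
    rw [hs, T_eq_lommelS, one_div_sq_pow_mul_lommelS]
  have orthogonal := hasSum_lommelS_mul_lommelS (show 2 * m ≠ 2 * n by omega)
  rw [← orthogonal.tsum_eq]
  refine tsum_congr fun ν => ?_
  rw [s_one_div_sq, s_one_div_sq]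
  ring
end

section
/- For any polynomial p of degree at most 2n−1, the n-point Gaussian summation rule is exact: ∑_{k=1}^n w_k p(x_k) = ∑_{ν∈ℤ, ν≠0} (1/ν²) p(1/ν²), where x_k are the eigenvalues of the n×n Jacobi matrix with diagonal entries a_0 = π²/15, a_k = 2π²/((4k+1)(4k+5)) and off-diagonal entries √b_k with b_k = π⁴/((4k−1)(4k+1)²(4k+3)), and w_k = μ_0 · v_{k,1}², with v_{k,1} the first component of the normalized eigenvector for eigenvalue x_k and μ_0 = π²/3. -/
open Real Polynomial

/-!
The moments of the measure are zeta values, hence Bernoulli numbers, hence Taylor coefficients of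
`1 / z - cot z`. That function is the quotient `j₁ / j₀` of spherical Bessel functions, and the
three-term recurrence for `jₖ` expands it into the continued fraction
`z / (3 - z ^ 2 / (5 - z ^ 2 / (7 - ⋯)))`. Keeping every second convergent turns this into a
J-fraction, i.e. it writes the moments as `⟨e₀, Tᵐ e₀⟩` for a semi-infinite Jacobi operator `T`,
whose coefficients are those of the matrix up to the factor `π ^ 2`. Truncating `T` to an `n × n`
matrix does not change `⟨e₀, Tᵐ e₀⟩` for `m < 2 * n`, and the spectral theorem evaluates the
truncated moments as the weighted sum over the eigenvalues.
-/

namespace GaussianSummation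

open scoped PowerSeries Matrix Nat
open Finset

section JacobiOperator

variable {R M N : Type*} [CommSemiring R] [AddCommMonoid M] [Module R M]
  [AddCommMonoid N] [Module R N]

/-- The semi-infinite tridiagonal operator with diagonal `a 0, a 1, …` and off-diagonal
`b 0, b 1, …`, acting on sequences in an `R`-module. -/
def jacobiOperator (a b : ℕ → R) : Module.End R (ℕ → M) where
  toFun x
    | 0 => a 0 • x 0 + b 0 • x 1
    | k + 1 => b k • x k + a (k + 1) • x (k + 1) + b (k + 1) • x (k + 2)
  map_add' x y := by
    ext (_ | k) <;> simp only [Pi.add_apply] <;> module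
  map_smul' r x := by
    ext (_ | k) <;> simp only [Pi.smul_apply, RingHom.id_apply] <;> module

lemma jacobiOperator_apply_zero (a b : ℕ → R) (x : ℕ → M) :
    jacobiOperator a b x 0 = a 0 • x 0 + b 0 • x 1 := rfl

lemma jacobiOperator_apply_succ (a b : ℕ → R) (x : ℕ → M) (k : ℕ) :
    jacobiOperator a b x (k + 1) =
      b k • x k + a (k + 1) • x (k + 1) + b (k + 1) • x (k + 2) := rfl

lemma jacobiOperator_comp_apply (a b : ℕ → R) (g : M →ₗ[R] N) (x : ℕ → M) (k : ℕ) :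
    jacobiOperator a b (g ∘ x) k = g (jacobiOperator a b x k) := by
  cases k <;> simp only [jacobiOperator_apply_zero, jacobiOperator_apply_succ,
    Function.comp_apply, map_add, map_smul]

lemma jacobiOperator_smul (r : R) (a b : ℕ → R) :
    jacobiOperator (M := M) (r • a) (r • b) = r • jacobiOperator a b := by
  ext x (_ | k) <;> simp only [LinearMap.smul_apply, Pi.smul_apply, jacobiOperator_apply_zero,
    jacobiOperator_apply_succ] <;> module

lemma jacobiOperator_pow_single_apply_of_lt (a b : ℕ → R) {m k : ℕ} (hmk : m < k) :
    (jacobiOperator a b ^ m) (Pi.single 0 1) k = (0 : R) := by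
  induction m generalizing k with
  | zero => simp [hmk.ne']
  | succ m ih =>
    obtain ⟨k, rfl⟩ := Nat.exists_eq_add_one_of_ne_zero (Nat.ne_zero_of_lt hmk)
    rw [pow_succ', Module.End.mul_apply, jacobiOperator_apply_succ, ih (by omega),
      ih (by omega), ih (by omega)]
    simp only [smul_zero, add_zero]

/-- The leading `n × n` section of `jacobiOperator a b`, as a matrix. -/
def jacobiMatrix (n : ℕ) (a b : ℕ → R) : Matrix (Fin n) (Fin n) R :=
  Matrix.of fun i j ↦ (if j = i then a i else 0) +
    (if (j : ℕ) = i + 1 then b i else 0) + (if (i : ℕ) = j + 1 then b j else 0)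

lemma jacobiMatrix_apply {n : ℕ} (a b : ℕ → R) (i j : Fin n) :
    jacobiMatrix n a b i j =
      if i = j then a i
      else if (i : ℕ) + 1 = j ∨ (j : ℕ) + 1 = i then b (min i j) else 0 := by
  simp only [jacobiMatrix, Matrix.of_apply, Fin.ext_iff, eq_comm (a := (j : ℕ))]
  split_ifs <;> grind

lemma jacobiMatrix_mulVec_apply {n : ℕ} (a b x : ℕ → R) (i : Fin n)
    (h : (i : ℕ) + 1 = n → x n = 0) :
    (jacobiMatrix n a b *ᵥ fun j ↦ x j) i = jacobiOperator a b x i := by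
  have sum_ite (g : ℕ → R) (l : ℕ) :
      ∑ j : Fin n, (if (j : ℕ) = l then g j else 0) = if l < n then g l else 0 := by
    rw [Fin.sum_univ_eq_sum_range (fun j ↦ if j = l then g j else 0), sum_ite_eq']
    simp only [mem_range]
  have upper : (if (i : ℕ) + 1 < n then b i * x (i + 1) else 0) = b i * x (i + 1) := by
    split_ifs with hi
    · rfl
    · have hi' : (i : ℕ) + 1 = n := by omega
      rw [hi', h hi', mul_zero]
  obtain ⟨_ | i, hi⟩ := i <;>
  simp only [Matrix.mulVec, dotProduct, jacobiMatrix, Matrix.of_apply, Fin.ext_iff, add_mul,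
    ite_mul, zero_mul, sum_add_distrib] at upper ⊢
  · rw [sum_ite fun j ↦ a 0 * x j, sum_ite fun j ↦ b 0 * x j, if_pos hi, upper]
    simp [jacobiOperator_apply_zero]
  · simp only [Nat.add_right_cancel_iff, eq_comm (a := i)]
    rw [sum_ite fun j ↦ a (i + 1) * x j, sum_ite fun j ↦ b (i + 1) * x j,
      sum_ite fun j ↦ b j * x j, if_pos hi, if_pos (Nat.lt_of_succ_lt hi), upper,
      jacobiOperator_apply_succ]
    simp only [smul_eq_mul]
    ring

/-- A path of `m` steps from `0` to `i` notices the truncation at `n` only if it visits `n`,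
which takes `n` steps out and at least `n - i` back. -/
lemma jacobiMatrix_pow_apply_zero {n : ℕ} (hn : 0 < n) (a b : ℕ → R) {m : ℕ} (i : Fin n)
    (hmi : m + i < 2 * n) :
    (jacobiMatrix n a b ^ m) i ⟨0, hn⟩ = (jacobiOperator a b ^ m) (Pi.single 0 1) i := by
  induction m generalizing i with
  | zero => simp [Matrix.one_apply, Pi.single_apply, Fin.ext_iff]
  | succ m ih =>
    rw [pow_succ', pow_succ', Matrix.mul_apply, Module.End.mul_apply,
      ← jacobiMatrix_mulVec_apply a b _ i fun hi ↦
        jacobiOperator_pow_single_apply_of_lt a b (by omega)]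
    refine sum_congr rfl fun j _ ↦ ?_
    obtain hij | hij := lt_or_ge ((i : ℕ) + 1) j
    · simp only [jacobiMatrix_apply, if_neg (show i ≠ j by grind),
        if_neg (show ¬((i : ℕ) + 1 = j ∨ (j : ℕ) + 1 = i) by omega), zero_mul]
    · rw [ih j (by omega)]

lemma aeval_jacobiMatrix_apply_zero {n : ℕ} (hn : 0 < n) (a b : ℕ → R) {p : R[X]}
    (hp : p.natDegree < 2 * n) :
    aeval (jacobiMatrix n a b) p ⟨0, hn⟩ ⟨0, hn⟩ =
      aeval (jacobiOperator a b) p (Pi.single 0 1) 0 := by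
  simp only [aeval_eq_sum_range, Matrix.sum_apply, LinearMap.sum_apply, Finset.sum_apply,
    Matrix.smul_apply, LinearMap.smul_apply, Pi.smul_apply]
  refine sum_congr rfl fun m hm ↦ ?_
  rw [jacobiMatrix_pow_apply_zero hn a b ⟨0, hn⟩ (by grind)]

end JacobiOperator

lemma eq_zero_of_eq_X_mul_jacobiOperator {R : Type*} [CommSemiring R] {a b : ℕ → R}
    {W : ℕ → R⟦X⟧} (hW : ∀ k, W k = PowerSeries.X * jacobiOperator a b W k) : W = 0 := by
  suffices h : ∀ m, PowerSeries.coeff m ∘ W = 0 by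
    ext k m
    exact congrFun (h m) k
  intro m
  induction m with
  | zero =>
    ext k
    rw [Function.comp_apply, hW, PowerSeries.coeff_zero_X_mul, Pi.zero_apply]
  | succ m ih =>
    ext k
    rw [Function.comp_apply, hW, PowerSeries.coeff_succ_X_mul, ← jacobiOperator_comp_apply, ih,
      map_zero]

/-- The resolvent equation `W = F e₀ + X T W` has the Neumann series `F ∑ Xᵐ Tᵐ e₀` as its only
solution. -/
lemma eq_mul_mk_of_eq_add_X_mul_jacobiOperator {R : Type*} [CommRing R] {a b : ℕ → R}
    {W : ℕ → R⟦X⟧} {F : R⟦X⟧}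
    (hW : ∀ k, W k = (Pi.single 0 F : ℕ → R⟦X⟧) k + PowerSeries.X * jacobiOperator a b W k)
    (k : ℕ) :
    W k = F * PowerSeries.mk fun m ↦ (jacobiOperator a b ^ m) (Pi.single 0 1) k := by
  set G : ℕ → R⟦X⟧ := fun k ↦
    PowerSeries.mk fun m ↦ (jacobiOperator a b ^ m) (Pi.single 0 1) k with hG
  have coeff_G (m : ℕ) : PowerSeries.coeff m ∘ G =
      (jacobiOperator a b ^ m) (Pi.single 0 1) := by
    ext k
    simp only [hG, Function.comp_apply, PowerSeries.coeff_mk]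
  have G_eq (k : ℕ) :
      G k = (Pi.single 0 1 : ℕ → R⟦X⟧) k + PowerSeries.X * jacobiOperator a b G k := by
    ext (_ | m)
    · cases k <;> simp [hG]
    · rw [map_add, PowerSeries.coeff_succ_X_mul, ← jacobiOperator_comp_apply, coeff_G,
        ← Module.End.mul_apply, ← pow_succ']
      cases k <;> simp [hG, PowerSeries.coeff_one]
  have sub_eq (k : ℕ) : (W - LinearMap.mulLeft R F ∘ G) k =
      PowerSeries.X * jacobiOperator a b (W - LinearMap.mulLeft R F ∘ G) k := by
    rw [map_sub, Pi.sub_apply, Pi.sub_apply, jacobiOperator_comp_apply, hW k,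
      Function.comp_apply, G_eq k]
    cases k <;> simp <;> ring
  exact sub_eq_zero.1 (congrFun (eq_zero_of_eq_X_mul_jacobiOperator sub_eq) k)

lemma aeval_apply_eq_sum_eigenvalues {𝕜 ι : Type*} [RCLike 𝕜] [Fintype ι] [DecidableEq ι]
    {A : Matrix ι ι 𝕜} (hA : A.IsHermitian) (p : ℝ[X]) (i j : ι) :
    aeval A p i j = ∑ k, hA.eigenvectorBasis k i * star (hA.eigenvectorBasis k j) *
      ((p.eval (hA.eigenvalues k) : ℝ) : 𝕜) := by
  have diagonalization : aeval A p = hA.eigenvectorUnitary *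
      Matrix.diagonal (fun k ↦ ((p.eval (hA.eigenvalues k) : ℝ) : 𝕜)) *
        (star hA.eigenvectorUnitary : Matrix ι ι 𝕜) := by
    conv_lhs => rw [hA.spectral_theorem]
    refine (aeval_algHom_apply (Unitary.conjStarAlgAut ℝ _ hA.eigenvectorUnitary)
      (Matrix.diagonal (RCLike.ofReal ∘ hA.eigenvalues)) p).trans (congrArg _ ?_)
    refine (aeval_algHom_apply (Matrix.diagonalAlgHom ℝ)
      (RCLike.ofReal ∘ hA.eigenvalues : ι → 𝕜) p).trans (congrArg Matrix.diagonal ?_)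
    ext k
    rw [aeval_pi_apply]
    exact aeval_ofReal ..
  rw [diagonalization, Matrix.mul_apply]
  refine sum_congr rfl fun k _ ↦ ?_
  rw [Matrix.mul_diagonal, Matrix.star_apply, Matrix.IsHermitian.eigenvectorUnitary_apply,
    Matrix.IsHermitian.eigenvectorUnitary_apply]
  ring

lemma sum_bernoulli_mul_choose_mul_two_pow (n : ℕ) :
    ∑ i ∈ range (n + 1), (_root_.bernoulli i : ℝ) * n.choose i * 2 ^ i =
      2 ^ n * bernoulliFun n 2⁻¹ := by
  rw [bernoulliFun, Polynomial.bernoulli, Polynomial.map_sum, eval_finsetSum, mul_sum]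
  refine sum_congr rfl fun i hi ↦ ?_
  obtain ⟨d, rfl⟩ := Nat.exists_eq_add_of_le (mem_range_succ_iff.1 hi)
  rw [map_monomial, eval_monomial, Nat.add_sub_cancel_left, pow_add, inv_pow, eq_ratCast]
  push_cast
  field_simp

lemma sum_range_two_mul {M : Type*} [AddCommMonoid M] (g : ℕ → M) (n : ℕ) :
    ∑ i ∈ range (2 * n), g i = ∑ j ∈ range n, (g (2 * j) + g (2 * j + 1)) := by
  induction n with
  | zero => rfl
  | succ n ih => rw [mul_add_one, sum_range_succ, sum_range_succ, ih, sum_range_succ, add_assoc]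

/-- The even part of `∑ i, C(n, i) 2ⁱ Bᵢ = 2ⁿ Bₙ(1/2) = 0` for `n = 2m + 3`; the terms of index
`0` and `1` contribute `1 - n`. -/
lemma sum_bernoulli_two_mul_mul_choose_mul_two_pow (m : ℕ) :
    ∑ j ∈ range (m + 1),
      (_root_.bernoulli (2 * j + 2) : ℝ) * (2 * m + 3).choose (2 * j + 2) * 2 ^ (2 * j + 2) =
        2 * m + 2 := by
  have h := sum_bernoulli_mul_choose_mul_two_pow (2 * m + 3)
  rw [show 2 * m + 3 = 2 * (m + 1) + 1 by ring, bernoulliFun_eval_half_eq_zero, mul_zero,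
    show 2 * (m + 1) + 1 + 1 = 2 * (m + 2) by ring, sum_range_two_mul, sum_range_succ'] at h
  have odd_vanish (j : ℕ) : _root_.bernoulli (2 * (j + 1) + 1) = 0 :=
    bernoulli_eq_zero_of_odd ⟨j + 1, rfl⟩ (by omega)
  simp only [odd_vanish, Rat.cast_zero, zero_mul, add_zero] at h
  norm_num [mul_add_one] at h
  linarith

/-- The formal spherical Bessel function of order `k`: `z ^ (-k) * jₖ z` as a power series in
`X = z ^ 2`. -/
noncomputable def sphericalBessel (k : ℕ) : ℝ⟦X⟧ :=
  PowerSeries.mk fun m ↦ (-1) ^ m / (m ! * 2 ^ m * (2 * k + 2 * m + 1)‼)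

lemma sphericalBessel_recurrence (k : ℕ) :
    sphericalBessel k =
      (2 * k + 3 : ℝ) • sphericalBessel (k + 1) - PowerSeries.X * sphericalBessel (k + 2) := by
  have doubleFactorial_ne_zero (n : ℕ) : (n‼ : ℝ) ≠ 0 := mod_cast (Nat.doubleFactorial_pos n).ne'
  ext (_ | m)
  · have odd_ne_zero := doubleFactorial_ne_zero (2 * k + 1)
    have factor_ne_zero : (2 * k + 1 + 2 : ℝ) ≠ 0 := by positivity
    simp only [sphericalBessel, map_sub, PowerSeries.coeff_smul, PowerSeries.coeff_zero_X_mul,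
      PowerSeries.coeff_mk, smul_eq_mul]
    rw [show 2 * (k + 1) + 2 * 0 + 1 = 2 * k + 1 + 2 by ring, mul_zero, add_zero,
      Nat.doubleFactorial_add_two (2 * k + 1)]
    push_cast
    field_simp
    ring
  · have odd_ne_zero := doubleFactorial_ne_zero (2 * k + 2 * m + 3)
    have factorial_ne_zero : (m ! : ℝ) ≠ 0 := mod_cast m.factorial_ne_zero
    have succ_ne_zero : (m + 1 : ℝ) ≠ 0 := by positivity
    simp only [sphericalBessel, map_sub, PowerSeries.coeff_smul, PowerSeries.coeff_succ_X_mul,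
      PowerSeries.coeff_mk, smul_eq_mul]
    rw [show 2 * (k + 1) + 2 * (m + 1) + 1 = 2 * k + 2 * m + 3 + 2 by ring,
      show 2 * (k + 2) + 2 * m + 1 = 2 * k + 2 * m + 3 + 2 by ring,
      show 2 * k + 2 * (m + 1) + 1 = 2 * k + 2 * m + 3 by ring,
      Nat.doubleFactorial_add_two (2 * k + 2 * m + 3), Nat.factorial_succ]
    push_cast
    field_simp
    ring

lemma coeff_sphericalBessel_zero (m : ℕ) :
    PowerSeries.coeff m (sphericalBessel 0) = (-1) ^ m / (2 * m + 1)! := by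
  rw [sphericalBessel, PowerSeries.coeff_mk, Nat.factorial_eq_mul_doubleFactorial,
    Nat.doubleFactorial_two_mul, mul_zero, zero_add]
  push_cast
  ring

lemma coeff_sphericalBessel_one (m : ℕ) :
    PowerSeries.coeff m (sphericalBessel 1) = (-1) ^ m * (2 * m + 2) / (2 * m + 3)! := by
  rw [sphericalBessel, PowerSeries.coeff_mk, Nat.factorial_eq_mul_doubleFactorial,
    show 2 * m + 2 = 2 * (m + 1) by ring, Nat.doubleFactorial_two_mul, Nat.factorial_succ,
    show 2 * 1 + 2 * m + 1 = 2 * (m + 1) + 1 by ring]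
  push_cast
  field_simp
  ring

lemma sphericalBessel_zero_ne_zero : sphericalBessel 0 ≠ 0 := by
  intro h
  simpa [h] using coeff_sphericalBessel_zero 0

/-- The sum of `1 / (π * ν) ^ (2 * m + 2)` over the nonzero integers `ν`, in Euler's closed
form. -/
noncomputable def cotCoeff (m : ℕ) : ℝ :=
  (-1) ^ m * 2 ^ (2 * m + 2) * _root_.bernoulli (2 * m + 2) / (2 * m + 2)!

/-- With `X = z ^ 2` this is `cot z = 1 / z - ∑ m, cotCoeff m * z ^ (2 * m + 1)`, multiplied
by `sin z / z ^ 2`. -/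
lemma sphericalBessel_one_eq_mul_mk_cotCoeff :
    sphericalBessel 1 = sphericalBessel 0 * PowerSeries.mk cotCoeff := by
  ext m
  rw [mul_comm, PowerSeries.coeff_mul, Nat.sum_antidiagonal_eq_sum_range_succ fun i j ↦
    PowerSeries.coeff i (PowerSeries.mk cotCoeff) * PowerSeries.coeff j (sphericalBessel 0),
    coeff_sphericalBessel_one, ← sum_bernoulli_two_mul_mul_choose_mul_two_pow, mul_sum, sum_div]
  refine sum_congr rfl fun j hj ↦ ?_
  obtain ⟨d, rfl⟩ := Nat.exists_eq_add_of_le (mem_range_succ_iff.1 hj)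
  rw [Nat.add_sub_cancel_left, PowerSeries.coeff_mk, coeff_sphericalBessel_zero, cotCoeff,
    Nat.cast_choose ℝ (show 2 * j + 2 ≤ 2 * (j + d) + 3 by omega),
    show 2 * (j + d) + 3 - (2 * j + 2) = 2 * d + 1 by omega, pow_add]
  field_simp

lemma hasSum_int_one_div_pow_two_mul {k : ℕ} (hk : k ≠ 0) :
    HasSum (fun ν : ℤ ↦ 1 / (ν : ℝ) ^ (2 * k))
      ((-1) ^ (k + 1) * 2 ^ (2 * k) * π ^ (2 * k) * _root_.bernoulli (2 * k) / (2 * k)!) := by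
  have h := hasSum_zeta_nat hk
  convert! HasSum.of_nat_of_neg (f := fun ν : ℤ ↦ 1 / (ν : ℝ) ^ (2 * k))
    (by simpa using h) (by simpa [Even.neg_pow] using h) using 1
  obtain ⟨l, rfl⟩ := Nat.exists_eq_add_one_of_ne_zero hk
  rw [show 2 * (l + 1) - 1 = 2 * l + 1 by omega]
  simp
  ring

lemma hasSum_one_div_sq_mul_pow (m : ℕ) :
    HasSum (fun ν : {ν : ℤ // ν ≠ 0} ↦ 1 / (ν : ℝ) ^ 2 * (1 / (ν : ℝ) ^ 2) ^ m)
      (π ^ 2 * ((π ^ 2) ^ m * cotCoeff m)) := by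
  have h := (hasSum_subtype_iff_of_support_subset (s := {ν : ℤ | ν ≠ 0}) ?_).2
    (hasSum_int_one_div_pow_two_mul m.succ_ne_zero)
  · convert! h using 1
    · ext ν
      rw [← pow_succ', one_div_pow, ← pow_mul, Function.comp_apply]
    · rw [cotCoeff, Nat.succ_eq_add_one, mul_add_one]
      ring
  · rintro ν hν rfl
    simp at hν

section ContinuedFraction

variable {K : Type*} [Field K] {c : ℕ → K} {f : ℕ → K⟦X⟧}

lemma continuedFraction_step (hc : ∀ k, c k ≠ 0)
    (hf : ∀ k, f k = c k • f (k + 1) - PowerSeries.X * f (k + 2)) (k : ℕ) :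
    f (k + 1) = (1 / c k) • (f k + PowerSeries.X * f (k + 2)) := by
  rw [hf k, sub_add_cancel, smul_smul, one_div_mul_cancel (hc k), one_smul]

lemma continuedFraction_contraction_zero (hc : ∀ k, c k ≠ 0)
    (hf : ∀ k, f k = c k • f (k + 1) - PowerSeries.X * f (k + 2)) :
    f 1 = (1 / c 0) • f 0 + PowerSeries.X *
      ((1 / (c 0 * c 1)) • f 1 + (1 / (c 0 * c 1)) • (PowerSeries.X * f 3)) := by
  have step := continuedFraction_step hc hf
  calc f 1 = (1 / c 0) • (f 0 + PowerSeries.X * (1 / c 1) • (f 1 + PowerSeries.X * f 3)) := by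
        rw [← step 1, ← step 0]
    _ = _ := by
      simp only [mul_add, mul_smul_comm]
      module

lemma continuedFraction_contraction_add_two (hc : ∀ k, c k ≠ 0)
    (hf : ∀ k, f k = c k • f (k + 1) - PowerSeries.X * f (k + 2)) (k : ℕ) :
    f (k + 2) = (1 / (c k * c (k + 1))) • f k +
      PowerSeries.X * (((1 / c k + 1 / c (k + 2)) / c (k + 1)) • f (k + 2) +
        (1 / (c (k + 1) * c (k + 2))) • (PowerSeries.X * f (k + 4))) := by
  have step := continuedFraction_step hc hf
  calc f (k + 2) = (1 / c (k + 1)) • ((1 / c k) • (f k + PowerSeries.X * f (k + 2)) +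
        PowerSeries.X * (1 / c (k + 2)) • (f (k + 2) + PowerSeries.X * f (k + 4))) := by
        rw [← step k, ← step (k + 2), ← step (k + 1)]
    _ = _ := by
      simp only [mul_add, mul_smul_comm]
      module

end ContinuedFraction

section Contraction

/-- Diagonal of the Jacobi operator whose J-fraction is the even contraction of the continued
fraction `1 / (c 0 - X / (c 1 - X / (c 2 - ⋯)))`. -/
noncomputable def contractionDiag (c : ℕ → ℝ) : ℕ → ℝ
  | 0 => 1 / (c 0 * c 1)
  | k + 1 => (1 / c (2 * k + 1) + 1 / c (2 * k + 3)) / c (2 * k + 2)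

/-- Off-diagonal of the Jacobi operator with diagonal `contractionDiag c`. -/
noncomputable def contractionOffDiag (c : ℕ → ℝ) (k : ℕ) : ℝ :=
  1 / (√(c (2 * k)) * c (2 * k + 1) * √(c (2 * k + 2)))

variable {c : ℕ → ℝ} {f : ℕ → ℝ⟦X⟧}

/-- The factor `X ^ k` makes the recurrence tridiagonal, the factor `√(c (2 * k))` makes it
symmetric. -/
lemma contraction_eq_add_X_mul_jacobiOperator (hc : ∀ k, 0 < c k)
    (hf : ∀ k, f k = c k • f (k + 1) - PowerSeries.X * f (k + 2)) (k : ℕ) :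
    PowerSeries.X ^ k * √(c (2 * k)) • f (2 * k + 1) =
      (Pi.single 0 ((1 / √(c 0)) • f 0) : ℕ → ℝ⟦X⟧) k +
        PowerSeries.X * jacobiOperator (contractionDiag c) (contractionOffDiag c)
          (fun k ↦ PowerSeries.X ^ k * √(c (2 * k)) • f (2 * k + 1)) k := by
  obtain ⟨s, hs, rfl⟩ : ∃ s : ℕ → ℝ, (∀ j, 0 < s j) ∧ s ^ 2 = c :=
    ⟨fun j ↦ √(c j), fun j ↦ Real.sqrt_pos.2 (hc j), funext fun j ↦ Real.sq_sqrt (hc j).le⟩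
  have s_ne_zero (j : ℕ) : s j ≠ 0 := (hs j).ne'
  have sq_ne_zero (j : ℕ) : (s ^ 2) j ≠ 0 := (hc j).ne'
  have sqrt_sq (j : ℕ) : √(s j ^ 2) = s j := Real.sqrt_sq (hs j).le
  cases k with
  | zero =>
    have h := continuedFraction_contraction_zero sq_ne_zero hf
    rw [jacobiOperator_apply_zero, Pi.single_eq_same]
    simp only [contractionDiag, contractionOffDiag, Pi.pow_apply, sqrt_sq, mul_zero, zero_add,
      mul_one, pow_zero, one_mul, pow_one] at h ⊢
    refine (congrArg (s 0 • ·) h).trans ?_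
    simp only [smul_add, mul_add, mul_smul_comm, smul_smul]
    match_scalars <;> field_simp [s_ne_zero]
  | succ k =>
    have h := continuedFraction_contraction_add_two sq_ne_zero hf (2 * k + 1)
    rw [jacobiOperator_apply_succ, Pi.single_eq_of_ne k.succ_ne_zero, zero_add]
    simp only [contractionDiag, contractionOffDiag, Pi.pow_apply, sqrt_sq, mul_add_one] at h ⊢
    refine (congrArg (PowerSeries.X ^ (k + 1) * s (2 * k + 2) • ·) h).trans ?_
    simp only [smul_add, mul_add, mul_smul_comm, smul_smul, ← mul_assoc, ← pow_succ, ← pow_succ']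
    match_scalars <;> field_simp [s_ne_zero]

lemma smul_eq_mul_mk_contraction (hc : ∀ k, 0 < c k)
    (hf : ∀ k, f k = c k • f (k + 1) - PowerSeries.X * f (k + 2)) :
    c 0 • f 1 = f 0 * PowerSeries.mk fun m ↦
      (jacobiOperator (contractionDiag c) (contractionOffDiag c) ^ m) (Pi.single 0 1) 0 := by
  have h := eq_mul_mk_of_eq_add_X_mul_jacobiOperator
    (contraction_eq_add_X_mul_jacobiOperator hc hf) 0
  simpa [smul_smul, Real.mul_self_sqrt (hc 0).le, (Real.sqrt_pos.2 (hc 0)).ne'] using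
    congrArg (√(c 0) • ·) h

end Contraction

/-- Diagonal Jacobi coefficients of the measure `∑ ν ≠ 0, ν⁻² δ_{ν⁻²}`. The continued fraction of
`j₁ / j₀`, whose poles are the points `π * ν`, gives those of the measure with nodes `(π * ν)⁻²`;
hence the factor `π ^ 2`. -/
noncomputable def gaussianDiag : ℕ → ℝ :=
  π ^ 2 • contractionDiag fun k ↦ 2 * k + 3

/-- Off-diagonal Jacobi coefficients of the measure `∑ ν ≠ 0, ν⁻² δ_{ν⁻²}`. -/
noncomputable def gaussianOffDiag : ℕ → ℝ :=
  π ^ 2 • contractionOffDiag fun k ↦ 2 * k + 3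

lemma three_mul_cotCoeff_eq_jacobiOperator_pow (m : ℕ) :
    3 * cotCoeff m = (jacobiOperator (contractionDiag fun k ↦ 2 * k + 3)
      (contractionOffDiag fun k ↦ 2 * k + 3) ^ m) (Pi.single 0 1) 0 := by
  have h := smul_eq_mul_mk_contraction (c := fun k ↦ 2 * k + 3) (fun k ↦ by positivity)
    sphericalBessel_recurrence
  rw [sphericalBessel_one_eq_mul_mk_cotCoeff, ← mul_smul_comm] at h
  simpa using congrArg (PowerSeries.coeff m) (mul_left_cancel₀ sphericalBessel_zero_ne_zero h)

lemma hasSum_one_div_sq_mul_eval (p : ℝ[X]) :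
    HasSum (fun ν : {ν : ℤ // ν ≠ 0} ↦ 1 / (ν : ℝ) ^ 2 * p.eval (1 / (ν : ℝ) ^ 2))
      (π ^ 2 / 3 *
        aeval (jacobiOperator gaussianDiag gaussianOffDiag) p (Pi.single 0 1 : ℕ → ℝ) 0) := by
  have h := hasSum_sum fun m (_ : m ∈ range (p.natDegree + 1)) ↦
    (hasSum_one_div_sq_mul_pow m).mul_left (p.coeff m)
  convert! h using 1
  · ext ν
    rw [eval_eq_sum_range, mul_sum]
    exact sum_congr rfl fun m _ ↦ mul_left_comm ..
  · simp only [gaussianDiag, gaussianOffDiag, jacobiOperator_smul, aeval_eq_sum_range,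
      _root_.smul_pow, LinearMap.sum_apply, Finset.sum_apply, LinearMap.smul_apply, Pi.smul_apply,
      smul_eq_mul, ← three_mul_cotCoeff_eq_jacobiOperator_pow, mul_sum]
    refine sum_congr rfl fun m _ ↦ ?_
    ring

lemma sum_eigenvectorBasis_sq_mul_eval {n : ℕ} (hn : 0 < n) {a b : ℕ → ℝ}
    (hA : (jacobiMatrix n a b).IsHermitian) {p : ℝ[X]} (hp : p.natDegree < 2 * n) :
    ∑ k, hA.eigenvectorBasis k ⟨0, hn⟩ ^ 2 * p.eval (hA.eigenvalues k) =
      aeval (jacobiOperator a b) p (Pi.single 0 1 : ℕ → ℝ) 0 := by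
  rw [← aeval_jacobiMatrix_apply_zero hn a b hp, aeval_apply_eq_sum_eigenvalues hA]
  simp only [star_trivial, sq, RCLike.ofReal_real_eq_id, id]

lemma gaussianDiag_zero : gaussianDiag 0 = π ^ 2 / 15 := by
  norm_num [gaussianDiag, contractionDiag]
  ring

lemma gaussianDiag_of_ne_zero {k : ℕ} (hk : k ≠ 0) :
    gaussianDiag k = 2 * π ^ 2 / ((4 * k + 1) * (4 * k + 5)) := by
  obtain ⟨k, rfl⟩ := Nat.exists_eq_add_one_of_ne_zero hk
  simp only [gaussianDiag, contractionDiag, Pi.smul_apply, smul_eq_mul]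
  push_cast
  field_simp
  ring

lemma gaussianOffDiag_eq_sqrt (k : ℕ) :
    gaussianOffDiag k = √(π ^ 4 /
      ((4 * (k + 1 : ℝ) - 1) * (4 * (k + 1 : ℝ) + 1) ^ 2 * (4 * (k + 1 : ℝ) + 3))) := by
  have sq_sqrt_left : √(4 * k + 3 : ℝ) ^ 2 = 4 * k + 3 := Real.sq_sqrt (by positivity)
  have sq_sqrt_right : √(4 * k + 7 : ℝ) ^ 2 = 4 * k + 7 := Real.sq_sqrt (by positivity)
  have expand : gaussianOffDiag k =
      π ^ 2 / (√(4 * k + 3 : ℝ) * (4 * k + 5) * √(4 * k + 7 : ℝ)) := by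
    simp only [gaussianOffDiag, contractionOffDiag, Pi.smul_apply, smul_eq_mul, mul_one_div]
    push_cast
    ring_nf
  rw [expand, eq_comm, Real.sqrt_eq_iff_mul_self_eq_of_pos (by positivity), ← sq, div_pow,
    mul_pow, mul_pow, sq_sqrt_left, sq_sqrt_right]
  ring_nf

lemma gaussianOffDiag_min {i j : ℕ} (hij : i + 1 = j ∨ j + 1 = i) :
    gaussianOffDiag (min i j) =
      √(π ^ 4 / ((4 * (max i j : ℝ) - 1) * (4 * (max i j : ℝ) + 1) ^ 2 *
        (4 * (max i j : ℝ) + 3))) := by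
  have h : (max i j : ℝ) = (min i j : ℕ) + 1 := by
    rw [← Nat.cast_max]
    exact_mod_cast (show max i j = min i j + 1 by omega)
  rw [gaussianOffDiag_eq_sqrt, h]

end GaussianSummation

/-- Golub–Welsch: the `n`-point Gaussian summation rule is exact on polynomials of
degree at most `2n−1`.  The nodes `x_k` are the eigenvalues of the symmetric tridiagonal
Jacobi matrix with diagonal `a_0 = π²/15`, `a_k = 2π²/((4k+1)(4k+5))` (`k ≥ 1`) and
off-diagonal `√b_k`, `b_k = π⁴/((4k−1)(4k+1)²(4k+3))`, and the weights are
`w_k = μ_0 v_{k,1}²` with `v_{k,1}` the first component of the normalized eigenvector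
for eigenvalue `x_k` and `μ_0 = π²/3`. -/
theorem gaussian_summation_golub_welsch (n : ℕ) (hn : 0 < n)
    (J : Matrix (Fin n) (Fin n) ℝ)
    (hJ : ∀ i j : Fin n,
      J i j =
        if i = j then (if (i : ℕ) = 0 then π ^ 2 / 15
          else 2 * π ^ 2 / ((4 * (i : ℝ) + 1) * (4 * (i : ℝ) + 5)))
        else if (i : ℕ) + 1 = (j : ℕ) ∨ (j : ℕ) + 1 = (i : ℕ) then
          Real.sqrt (π ^ 4 /
            ((4 * (max (i : ℕ) (j : ℕ) : ℝ) - 1) * (4 * (max (i : ℕ) (j : ℕ) : ℝ) + 1) ^ 2 *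
              (4 * (max (i : ℕ) (j : ℕ) : ℝ) + 3)))
        else 0)
    (hA : J.IsHermitian) :
    ∀ p : Polynomial ℝ, p.natDegree ≤ 2 * n - 1 →
      ∑ k : Fin n,
          (π ^ 2 / 3 * (hA.eigenvectorBasis k ⟨0, hn⟩) ^ 2) * p.eval (hA.eigenvalues k) =
        ∑' ν : {ν : ℤ // ν ≠ 0},
          (1 / ((ν : ℤ) : ℝ) ^ 2) * p.eval (1 / ((ν : ℤ) : ℝ) ^ 2) := by
  intro p hp
  obtain rfl : J = GaussianSummation.jacobiMatrix n GaussianSummation.gaussianDiag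
      GaussianSummation.gaussianOffDiag := by
    ext i j
    rw [hJ, GaussianSummation.jacobiMatrix_apply]
    split_ifs with hij hi hadj
    · rw [hi, GaussianSummation.gaussianDiag_zero]
    · rw [GaussianSummation.gaussianDiag_of_ne_zero hi]
    · rw [GaussianSummation.gaussianOffDiag_min hadj]
    · rfl
  rw [(GaussianSummation.hasSum_one_div_sq_mul_eval p).tsum_eq,
    ← GaussianSummation.sum_eigenvectorBasis_sq_mul_eval hn hA (by omega), Finset.mul_sum]
  simp only [mul_assoc]
end

section
/- For real a > 1 and integer n ≥ 1, the partial sums G_n(a) = 1/a² + 2∑_{k=1}^n 1/(a²+k²) satisfy G_n(a) = (π/a)coth(πa) − 2/n + 1/n² + (2a²−1)/(3n³) + O(a⁴/n⁴) as n → ∞, uniformly for a in compact subsets of (0,∞); in particular G(a) − G_n(a) = 2/n − 1/n² − (2a²−1)/(3n³) + O(a⁴/n⁴). -/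
open Real Filter Asymptotics

/-!
The limit `(π/a) coth(πa)` of the partial sums is the Mittag-Leffler expansion of the cotangent at
`ia`. For the rate, write `y = x + 1` and expand
`2/(a² + y²) = 2/y² - 2a²/y⁴ + 2a⁴/(y⁴(a² + y²))`.
In each power of `a²` the summand cancels the increment from `x` to `y` of the Euler–Maclaurin terms
up to an error of at most `1/x⁴ - 1/y⁴`. So the consecutive differences of the remainder are
dominated by those of `(1 + a² + a⁴)/n⁴`, and since the remainder tends to `0` it is itself at most
`(1 + a² + a⁴)/n⁴`.
-/

open scoped Topology

theorem dist_le_sub_of_tendsto_of_dist_succ_le {α : Type*} [PseudoMetricSpace α] {u : ℕ → α}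
    {e : ℕ → ℝ} {l : α} {c : ℝ} {n : ℕ}
    (hstep : ∀ m, n ≤ m → dist (u m) (u (m + 1)) ≤ e m - e (m + 1))
    (hu : Tendsto u atTop (𝓝 l)) (he : Tendsto e atTop (𝓝 c)) :
    dist (u n) l ≤ e n - c := by
  refine le_of_tendsto_of_tendsto (tendsto_const_nhds.dist hu) (he.const_sub (e n)) ?_
  filter_upwards [eventually_ge_atTop n] with m hm
  induction m, hm using Nat.le_induction with
  | base => simp
  | succ m hm ih => linarith [dist_triangle (u n) (u m) (u (m + 1)), hstep m hm]

section Coth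

variable {a : ℝ}

theorem I_mul_cot_mul_I (z : ℂ) :
    Complex.I * Complex.cot (z * Complex.I) = Complex.cosh z / Complex.sinh z := by
  rw [Complex.cot, Complex.cos_mul_I, Complex.sin_mul_I, mul_comm (Complex.sinh z), mul_div_assoc',
    mul_div_mul_left _ _ Complex.I_ne_zero]

theorem ofReal_mul_I_mem_integerComplement (ha : a ≠ 0) :
    (a * Complex.I : ℂ) ∈ Complex.integerComplement := by
  rintro ⟨m, hm⟩
  exact ha (by simpa using (congrArg Complex.im hm).symm)

theorem I_div_mul_cotTerm (ha : a ≠ 0) (k : ℕ) :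
    Complex.I / a * cotTerm (a * Complex.I) k = ((2 / (a ^ 2 + (k + 1) ^ 2) : ℝ) : ℂ) := by
  have ha' : (a : ℂ) ≠ 0 := Complex.ofReal_ne_zero.2 ha
  have hden : ((a : ℂ) ^ 2 + (k + 1) ^ 2) ≠ 0 := by
    exact_mod_cast (by positivity : a ^ 2 + ((k : ℝ) + 1) ^ 2 ≠ 0)
  have hfactor : (a * Complex.I + (k + 1)) * (a * Complex.I - (k + 1)) =
      -((a : ℂ) ^ 2 + (k + 1) ^ 2) := by
    linear_combination (a : ℂ) ^ 2 * Complex.I_sq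
  rw [cotTerm_identity (ofReal_mul_I_mem_integerComplement ha), hfactor]
  push_cast
  field_simp
  linear_combination -Complex.I_sq

theorem hasSum_coth (ha : a ≠ 0) :
    HasSum (fun k : ℕ => 2 / (a ^ 2 + ((k : ℝ) + 1) ^ 2))
      (π / a * (Real.cosh (π * a) / Real.sinh (π * a)) - 1 / a ^ 2) := by
  have ha' : (a : ℂ) ≠ 0 := Complex.ofReal_ne_zero.2 ha
  have hmem := ofReal_mul_I_mem_integerComplement ha
  have hcot : HasSum (cotTerm (a * Complex.I))
      (π * Complex.cot (π * (a * Complex.I)) - 1 / (a * Complex.I)) :=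
    (summable_cotTerm hmem).hasSum_iff_tendsto_nat.2 (tendsto_logDeriv_euler_cot_sub hmem)
  have hlim : Complex.I / a * (π * Complex.cot (π * (a * Complex.I)) - 1 / (a * Complex.I)) =
      ((π / a * (Real.cosh (π * a) / Real.sinh (π * a)) - 1 / a ^ 2 : ℝ) : ℂ) := by
    push_cast
    rw [← I_mul_cot_mul_I, mul_assoc (π : ℂ)]
    field_simp
  rw [← Complex.hasSum_ofReal, ← hlim]
  simpa only [I_div_mul_cotTerm ha] using hcot.mul_left (Complex.I / a)

/-- The symmetric partial sum `G_n(a) = ∑_{|k| ≤ n} 1/(a² + k²)`, with the terms `k` and `-k`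
combined. -/
noncomputable def cothPartialSum (a : ℝ) (n : ℕ) : ℝ :=
  1 / a ^ 2 + 2 * ∑ k ∈ Finset.Icc 1 n, 1 / (a ^ 2 + (k : ℝ) ^ 2)

theorem cothPartialSum_succ (a : ℝ) (n : ℕ) :
    cothPartialSum a (n + 1) = cothPartialSum a n + 2 / (a ^ 2 + ((n : ℝ) + 1) ^ 2) := by
  rw [cothPartialSum, cothPartialSum, Finset.sum_Icc_succ_top (by omega)]
  push_cast
  ring

theorem cothPartialSum_eq_sum_range (a : ℝ) (n : ℕ) :
    cothPartialSum a n = 1 / a ^ 2 + ∑ k ∈ Finset.range n, 2 / (a ^ 2 + ((k : ℝ) + 1) ^ 2) := by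
  induction n with
  | zero => simp [cothPartialSum]
  | succ n ih => rw [cothPartialSum_succ, ih, Finset.sum_range_succ, add_assoc]

theorem tendsto_cothPartialSum (ha : a ≠ 0) :
    Tendsto (cothPartialSum a) atTop
      (𝓝 (π / a * (Real.cosh (π * a) / Real.sinh (π * a)))) := by
  have hlim := (hasSum_coth ha).tendsto_sum_nat.const_add (1 / a ^ 2)
  rw [add_sub_cancel] at hlim
  exact hlim.congr fun n => (cothPartialSum_eq_sum_range a n).symm

end Coth

section Increments

variable {x : ℝ}

theorem abs_div_le_inv_pow_four_sub {p : ℝ} (hx : 0 < x)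
    (hp : |p| ≤ 4 * x ^ 3 + 6 * x ^ 2 + 4 * x + 1) :
    |p / (x ^ 4 * (x + 1) ^ 4)| ≤ 1 / x ^ 4 - 1 / (x + 1) ^ 4 := by
  have hdiff : 1 / x ^ 4 - 1 / (x + 1) ^ 4 =
      (4 * x ^ 3 + 6 * x ^ 2 + 4 * x + 1) / (x ^ 4 * (x + 1) ^ 4) := by
    field_simp
    ring
  rw [hdiff, abs_div, abs_of_pos (by positivity : 0 < x ^ 4 * (x + 1) ^ 4)]
  gcongr

theorem abs_increment_order_zero_le (hx : 0 < x) :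
    |2 / (x + 1) ^ 2 + (2 / (x + 1) - 1 / (x + 1) ^ 2 + 1 / (3 * (x + 1) ^ 3)) -
      (2 / x - 1 / x ^ 2 + 1 / (3 * x ^ 3))| ≤ 1 / x ^ 4 - 1 / (x + 1) ^ 4 := by
  convert abs_div_le_inv_pow_four_sub (p := -(x * (x + 1) / 3)) hx ?_ using 2
  · field_simp
    ring
  · rw [abs_neg, abs_of_nonneg (by positivity)]
    nlinarith [pow_pos hx 2, pow_pos hx 3]

theorem abs_increment_order_one_le (hx : 0 < x) :
    |2 / (3 * x ^ 3) - 2 / (3 * (x + 1) ^ 3) - 2 / (x + 1) ^ 4| ≤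
      1 / x ^ 4 - 1 / (x + 1) ^ 4 := by
  convert abs_div_le_inv_pow_four_sub (p := x * (12 * x ^ 2 + 8 * x + 2) / 3) hx ?_ using 2
  · field_simp
    ring
  · rw [abs_of_nonneg (by positivity)]
    nlinarith [pow_pos hx 2, pow_pos hx 3]

theorem abs_increment_order_two_le (a : ℝ) (hx : 0 < x) :
    |2 / ((x + 1) ^ 4 * (a ^ 2 + (x + 1) ^ 2))| ≤ 1 / x ^ 4 - 1 / (x + 1) ^ 4 := by
  convert abs_div_le_inv_pow_four_sub (p := 2 * x ^ 4 / (a ^ 2 + (x + 1) ^ 2)) hx ?_ using 2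
  · field_simp
  · rw [abs_of_nonneg (by positivity), div_le_iff₀ (by positivity)]
    have hx_le : x ≤ a ^ 2 + (x + 1) ^ 2 := by nlinarith [sq_nonneg a]
    calc 2 * x ^ 4 = 2 * x ^ 3 * x := by ring
      _ ≤ (4 * x ^ 3 + 6 * x ^ 2 + 4 * x + 1) * (a ^ 2 + (x + 1) ^ 2) := by
        gcongr
        nlinarith [pow_pos hx 2, pow_pos hx 3]

end Increments

section Remainder

variable {a : ℝ}

/-- The error of the Euler–Maclaurin expansion of `G_n(a)` to order `n⁻³`. The limit `G(a)` enters
through its closed form `(π/a) coth(πa)`. -/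
noncomputable def eulerMaclaurinRemainder (a : ℝ) (n : ℕ) : ℝ :=
  cothPartialSum a n -
    (π / a * (Real.cosh (π * a) / Real.sinh (π * a)) - 2 / (n : ℝ) + 1 / (n : ℝ) ^ 2 +
      (2 * a ^ 2 - 1) / (3 * (n : ℝ) ^ 3))

theorem tendsto_eulerMaclaurinRemainder (ha : a ≠ 0) :
    Tendsto (eulerMaclaurinRemainder a) atTop (𝓝 0) := by
  have hlim := (tendsto_cothPartialSum ha).sub
    ((((tendsto_const_div_pow 2 1 one_ne_zero).const_sub
      (π / a * (Real.cosh (π * a) / Real.sinh (π * a)))).add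
      (tendsto_const_div_pow 1 2 two_ne_zero)).add
        (tendsto_const_div_pow ((2 * a ^ 2 - 1) / 3) 3 three_ne_zero))
  simp only [sub_zero, add_zero, sub_self, pow_one, div_div] at hlim
  exact hlim

theorem abs_eulerMaclaurinRemainder_succ_sub_le (a : ℝ) {n : ℕ} (hn : 1 ≤ n) :
    |eulerMaclaurinRemainder a (n + 1) - eulerMaclaurinRemainder a n| ≤
      (1 + a ^ 2 + a ^ 4) * (1 / (n : ℝ) ^ 4 - 1 / ((n : ℝ) + 1) ^ 4) := by
  have hx : (0 : ℝ) < n := by exact_mod_cast hn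
  set x : ℝ := (n : ℝ)
  have hexpand : 2 / (a ^ 2 + (x + 1) ^ 2) = 2 / (x + 1) ^ 2 - a ^ 2 * (2 / (x + 1) ^ 4) +
      a ^ 4 * (2 / ((x + 1) ^ 4 * (a ^ 2 + (x + 1) ^ 2))) := by
    field_simp
    ring
  have hsplit : eulerMaclaurinRemainder a (n + 1) - eulerMaclaurinRemainder a n =
      (2 / (x + 1) ^ 2 + (2 / (x + 1) - 1 / (x + 1) ^ 2 + 1 / (3 * (x + 1) ^ 3)) -
        (2 / x - 1 / x ^ 2 + 1 / (3 * x ^ 3))) +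
      a ^ 2 * (2 / (3 * x ^ 3) - 2 / (3 * (x + 1) ^ 3) - 2 / (x + 1) ^ 4) +
      a ^ 4 * (2 / ((x + 1) ^ 4 * (a ^ 2 + (x + 1) ^ 2))) := by
    rw [eulerMaclaurinRemainder, eulerMaclaurinRemainder, cothPartialSum_succ, hexpand]
    push_cast
    ring
  rw [hsplit, add_mul, add_mul, one_mul]
  refine (abs_add_three _ _ _).trans ?_
  rw [abs_mul, abs_mul, abs_of_nonneg (by positivity : 0 ≤ a ^ 2),
    abs_of_nonneg (by positivity : 0 ≤ a ^ 4)]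
  gcongr
  exacts [abs_increment_order_zero_le hx, abs_increment_order_one_le hx,
    abs_increment_order_two_le a hx]

theorem abs_eulerMaclaurinRemainder_le (ha : a ≠ 0) {n : ℕ} (hn : 1 ≤ n) :
    |eulerMaclaurinRemainder a n| ≤ (1 + a ^ 2 + a ^ 4) / (n : ℝ) ^ 4 := by
  have hstep (m : ℕ) (hm : n ≤ m) :
      dist (eulerMaclaurinRemainder a m) (eulerMaclaurinRemainder a (m + 1)) ≤
        (1 + a ^ 2 + a ^ 4) / (m : ℝ) ^ 4 - (1 + a ^ 2 + a ^ 4) / ((m + 1 : ℕ) : ℝ) ^ 4 := by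
    rw [dist_comm, Real.dist_eq]
    refine (abs_eulerMaclaurinRemainder_succ_sub_le a (hn.trans hm)).trans_eq ?_
    push_cast
    ring
  simpa only [Real.dist_eq, sub_zero] using
    dist_le_sub_of_tendsto_of_dist_succ_le hstep (tendsto_eulerMaclaurinRemainder ha)
      (tendsto_const_div_pow (1 + a ^ 2 + a ^ 4) 4 four_ne_zero)

theorem exists_abs_eulerMaclaurinRemainder_le {K : Set ℝ} (hK : 0 ∉ closure K) :
    ∃ C : ℝ, ∀ a ∈ K, ∀ n : ℕ, 1 ≤ n →
      |eulerMaclaurinRemainder a n| ≤ C * a ^ 4 / (n : ℝ) ^ 4 := by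
  obtain ⟨δ, hδ, hKδ⟩ : ∃ δ > 0, ∀ a ∈ K, δ ≤ |a| := by
    simpa [Metric.mem_closure_iff] using hK
  refine ⟨1 / δ ^ 4 + 1 / δ ^ 2 + 1, fun a haK n hn => ?_⟩
  have hδa := hKδ a haK
  have ha : a ≠ 0 := abs_pos.1 (hδ.trans_le hδa)
  refine (abs_eulerMaclaurinRemainder_le ha hn).trans ?_
  gcongr
  calc 1 + a ^ 2 + a ^ 4 = (1 / |a| ^ 4 + 1 / |a| ^ 2 + 1) * a ^ 4 := by
        rw [(by decide : Even 4).pow_abs, sq_abs]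
        field_simp
    _ ≤ (1 / δ ^ 4 + 1 / δ ^ 2 + 1) * a ^ 4 := by gcongr

theorem isBigO_eulerMaclaurinRemainder (ha : a ≠ 0) :
    eulerMaclaurinRemainder a =O[atTop] fun n : ℕ => a ^ 4 / (n : ℝ) ^ 4 := by
  obtain ⟨C, hC⟩ := exists_abs_eulerMaclaurinRemainder_le (K := {a}) (by simpa using ha.symm)
  refine IsBigO.of_bound C ?_
  filter_upwards [eventually_ge_atTop 1] with n hn
  rw [Real.norm_eq_abs, Real.norm_of_nonneg (by positivity), mul_div_assoc']
  exact hC a rfl n hn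

end Remainder

theorem partial_sum_euler_maclaurin_general :
    (∀ a : ℝ, a ≠ 0 → eulerMaclaurinRemainder a =O[atTop] fun n : ℕ => a ^ 4 / (n : ℝ) ^ 4) ∧
    ∀ K : Set ℝ, 0 ∉ closure K → ∃ C : ℝ, ∀ a ∈ K, ∀ n : ℕ, 1 ≤ n →
      |eulerMaclaurinRemainder a n| ≤ C * a ^ 4 / (n : ℝ) ^ 4 :=
  ⟨fun _ => isBigO_eulerMaclaurinRemainder, fun _ => exists_abs_eulerMaclaurinRemainder_le⟩

/-- Euler–MacLaurin expansion of the partial sums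
`G_n(a) = 1/a² + 2∑_{k=1}^n 1/(a²+k²)`:
`G_n(a) = (π/a)coth(πa) − 2/n + 1/n² + (2a²−1)/(3n³) + O(a⁴/n⁴)` as `n → ∞`,
uniformly for `a` in compact subsets of `(0,∞)`. -/
theorem partial_sum_euler_maclaurin :
    (∀ a : ℝ, 1 < a →
      (fun n : ℕ =>
          (1 / a ^ 2 + 2 * ∑ k ∈ Finset.Icc 1 n, 1 / (a ^ 2 + (k : ℝ) ^ 2)) -
            (π / a * (Real.cosh (π * a) / Real.sinh (π * a)) - 2 / (n : ℝ) + 1 / (n : ℝ) ^ 2 +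
              (2 * a ^ 2 - 1) / (3 * (n : ℝ) ^ 3)))
        =O[atTop] (fun n : ℕ => a ^ 4 / (n : ℝ) ^ 4)) ∧
    ∀ K : Set ℝ, IsCompact K → K ⊆ Set.Ioi 0 →
      ∃ C : ℝ, ∀ a ∈ K, ∀ n : ℕ, 1 ≤ n →
        |(1 / a ^ 2 + 2 * ∑ k ∈ Finset.Icc 1 n, 1 / (a ^ 2 + (k : ℝ) ^ 2)) -
            (π / a * (Real.cosh (π * a) / Real.sinh (π * a)) - 2 / (n : ℝ) + 1 / (n : ℝ) ^ 2 +
              (2 * a ^ 2 - 1) / (3 * (n : ℝ) ^ 3))| ≤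
          C * a ^ 4 / (n : ℝ) ^ 4 :=
  ⟨fun _ ha => partial_sum_euler_maclaurin_general.1 _ (zero_lt_one.trans ha).ne',
    fun K hK hpos => partial_sum_euler_maclaurin_general.2 K
      fun h => Set.self_notMem_Ioi (hpos (hK.isClosed.closure_eq ▸ h))⟩
end
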